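/- For every real number x with 0 < |x| < 1/4, the series ∑_{n=1}^∞ C_n · (H_{2n} − (1/2)H_n) · x^n equals (1/(2x)) · (1 − √(1−4x) + √(1−4x) · ln √(1−4x)). -/

import Mathlib

/-!
The proof goes through first-order differential equations. Write `s = √(1 - 4x)`,
`h n = H (2n) - H n / 2`, and consider on `|x| < 1/4` the power series `A = ∑ binom(2n,n) xⁿ`,
`B = ∑ binom(2n,n) (h n) xⁿ` and `G = 2x ∑ (C n) (h n) xⁿ`.

Since `h (n+1) = h n + 1/(2n+1)` and `(n+1) binom(2n+2,n+1) = (4n+2) binom(2n,n)`, comparing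
coefficients gives `(1 - 4x) A' = 2A` and `(1 - 4x) B' = 2B + 2A` (`hasDerivAt_of_recurrence`).
As `s' = -2/s`, the first equation makes `s A` constant, so `A = 1/s`; the second then reads
`(s B)' = 2/(1 - 4x)`, so `s B = -log s`. Finally `G' = 2B = -2 (log s)/s`, which is also the
derivative of `1 - s + s log s`, and both functions vanish at `0`. Termwise differentiation is
justified by `binom(2n,n) ≤ 4ⁿ` and `0 ≤ h n ≤ n`.
-/

open Real

/-- The `n`-th harmonic number `H n = ∑_{k=1}^n 1/k`. -/
noncomputable def H (n : ℕ) : ℝ := ∑ k ∈ Finset.range n, 1 / (k + 1 : ℝ)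

/-- The `n`-th Catalan number `C n = (1/(n+1)) * binom(2n, n)`, as a real number. -/
noncomputable def C (n : ℕ) : ℝ := (Nat.choose (2 * n) n : ℝ) / (n + 1)

lemma summable_coeff {c : ℕ → ℝ} (hc : ∀ n, |c n| ≤ (n + 1) * 4 ^ n) {x : ℝ} (hx : |x| < 1 / 4) :
    Summable fun n => c n * x ^ n := by
  have h4 : ‖4 * |x|‖ < 1 := by
    rw [Real.norm_eq_abs, abs_of_nonneg (by positivity)]; linarith
  have h := (summable_pow_mul_geometric_of_norm_lt_one 1 h4).add
    (summable_pow_mul_geometric_of_norm_lt_one 0 h4)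
  refine Summable.of_norm_bounded h fun n => ?_
  rw [Real.norm_eq_abs, abs_mul, abs_pow, mul_pow]
  calc |c n| * |x| ^ n ≤ (n + 1) * 4 ^ n * |x| ^ n := by gcongr; exact hc n
    _ = _ := by ring

/-- Termwise differentiation of a power series whose coefficients grow at most like `n 4ⁿ`. -/
lemma hasDerivAt_series {c : ℕ → ℝ} (hc : ∀ n, |c n| ≤ (n + 1) * 4 ^ n) {x : ℝ}
    (hx : |x| < 1 / 4) :
    ∃ d : ℝ, HasDerivAt (fun y => ∑' n, c n * y ^ n) d x ∧
      HasSum (fun n : ℕ => ((n : ℝ) + 1) * c (n + 1) * x ^ n) d := by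
  obtain ⟨r, hxr, hr⟩ := exists_between hx
  have hr0 : 0 < r := (abs_nonneg x).trans_lt hxr
  have h4 : ‖4 * r‖ < 1 := by
    rw [Real.norm_eq_abs, abs_of_nonneg (by positivity)]; linarith
  have hu : Summable fun n : ℕ => ((n : ℝ) ^ 2 * (4 * r) ^ n + (n : ℝ) ^ 1 * (4 * r) ^ n) / r :=
    ((summable_pow_mul_geometric_of_norm_lt_one 2 h4).add
      (summable_pow_mul_geometric_of_norm_lt_one 1 h4)).div_const r
  have hbound : ∀ (n : ℕ) (y : ℝ), y ∈ Metric.ball (0 : ℝ) r →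
      ‖c n * ((n : ℝ) * y ^ (n - 1))‖ ≤
        ((n : ℝ) ^ 2 * (4 * r) ^ n + (n : ℝ) ^ 1 * (4 * r) ^ n) / r := by
    intro n y hy
    rw [mem_ball_zero_iff, Real.norm_eq_abs] at hy
    rcases n with _ | n
    · simp
    · rw [Real.norm_eq_abs, abs_mul, abs_mul, abs_pow, Nat.abs_cast, Nat.add_sub_cancel]
      calc |c (n + 1)| * (((n + 1 : ℕ) : ℝ) * |y| ^ n)
          ≤ (((n + 1 : ℕ) : ℝ) + 1) * 4 ^ (n + 1) * (((n + 1 : ℕ) : ℝ) * r ^ n) := by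
            gcongr; exact hc (n + 1)
        _ = _ := by field_simp; ring
  have hxb : x ∈ Metric.ball (0 : ℝ) r := by simpa using hxr
  have hD := hasDerivAt_tsum_of_isPreconnected (t := Metric.ball (0 : ℝ) r)
    (g := fun n y => c n * y ^ n) (g' := fun n y => c n * ((n : ℝ) * y ^ (n - 1)))
    hu Metric.isOpen_ball (convex_ball (0 : ℝ) r).isPreconnected
    (fun n y _ => (hasDerivAt_pow n y).const_mul (c n)) hbound
    (Metric.mem_ball_self hr0) (summable_coeff hc (by simp)) hxb
  refine ⟨_, hD, ?_⟩
  have hS : Summable fun n : ℕ => c n * ((n : ℝ) * x ^ (n - 1)) :=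
    Summable.of_norm_bounded hu fun n => hbound n x hxb
  have h1 := (hasSum_nat_add_iff' 1).2 hS.hasSum
  simp only [Finset.range_one, Finset.sum_singleton, Nat.cast_zero, zero_mul, mul_zero,
    sub_zero] at h1
  refine h1.congr_fun ?_
  intro n
  push_cast [Nat.add_sub_cancel]
  ring

/-- The coefficient recurrence `(n+1) c (n+1) = (4n+2) c n + e n` is the differential equation
`(1 - 4x) f' = 2 f + g` for the generating functions `f`, `g` of `c`, `e`. -/
lemma hasDerivAt_of_recurrence {c e : ℕ → ℝ} (hc : ∀ n, |c n| ≤ (n + 1) * 4 ^ n)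
    (he : ∀ n, (n + 1) * c (n + 1) = (4 * n + 2) * c n + e n) {x : ℝ} (hx : |x| < 1 / 4) :
    HasDerivAt (fun y => ∑' n, c n * y ^ n)
      ((2 * ∑' n, c n * x ^ n + ∑' n, e n * x ^ n) / (1 - 4 * x)) x := by
  obtain ⟨d, hd, hs⟩ := hasDerivAt_series hc hx
  have hx' := abs_lt.1 hx
  have hshift : HasSum (fun n : ℕ => (n : ℝ) * c n * x ^ n) (x * d) := by
    have h := hs.mul_left x
    rw [← hasSum_nat_add_iff' 1]
    simp only [Finset.range_one, Finset.sum_singleton, Nat.cast_zero, zero_mul, sub_zero]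
    refine h.congr_fun fun n => ?_
    push_cast
    ring
  have hE : HasSum (fun n => e n * x ^ n)
      (d - 4 * (x * d) - 2 * ∑' n, c n * x ^ n) := by
    refine ((hs.sub (hshift.mul_left 4)).sub
      ((summable_coeff hc hx).hasSum.mul_left 2)).congr_fun fun n => ?_
    linear_combination (-x ^ n) * he n
  rw [hE.tsum_eq]
  refine hd.congr_deriv ?_
  rw [eq_div_iff (by linarith)]
  ring

lemma eq_of_hasDerivAt {f g f' : ℝ → ℝ} (hf : ∀ y, |y| < 1 / 4 → HasDerivAt f (f' y) y)
    (hg : ∀ y, |y| < 1 / 4 → HasDerivAt g (f' y) y) (h0 : f 0 = g 0) {x : ℝ}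
    (hx : |x| < 1 / 4) : f x = g x := by
  have hd : ∀ y ∈ Metric.ball (0 : ℝ) (1 / 4), HasDerivAt (fun y => f y - g y) 0 y := by
    intro y hy
    rw [mem_ball_zero_iff, Real.norm_eq_abs] at hy
    exact ((hf y hy).sub (hg y hy)).congr_deriv (sub_self _)
  have := Metric.isOpen_ball.is_const_of_deriv_eq_zero
    (convex_ball (0 : ℝ) (1 / 4)).isPreconnected
    (fun y hy => (hd y hy).differentiableAt.differentiableWithinAt)
    (fun y hy => (hd y hy).deriv) (show x ∈ Metric.ball (0 : ℝ) (1 / 4) by simpa using hx)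
    (Metric.mem_ball_self (by norm_num))
  simp only [h0, sub_self] at this
  linarith

lemma hasDerivAt_sqrt_one_sub {y : ℝ} (hy : |y| < 1 / 4) :
    HasDerivAt (fun y : ℝ => √(1 - 4 * y)) (-2 / √(1 - 4 * y)) y := by
  have hy' := abs_lt.1 hy
  have h : HasDerivAt (fun y : ℝ => 1 - 4 * y) (-4) y := by
    simpa using ((hasDerivAt_id y).const_mul 4).const_sub 1
  refine (h.sqrt (by linarith)).congr_deriv ?_
  have : √(1 - 4 * y) ≠ 0 := (Real.sqrt_pos.2 (by linarith)).ne'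
  field_simp
  norm_num

/-- The harmonic factor `H (2n) - H n / 2`, the sum of the reciprocals of the first `n` odd
numbers. -/
noncomputable def oddH (n : ℕ) : ℝ := H (2 * n) - (1 / 2) * H n

lemma oddH_zero : oddH 0 = 0 := by simp [oddH, H]

lemma oddH_succ (n : ℕ) : oddH (n + 1) = oddH n + 1 / (2 * n + 1) := by
  have h : 2 * (n + 1) = 2 * n + 1 + 1 := by ring
  rw [oddH, oddH, h]
  simp only [H, Finset.sum_range_succ]
  push_cast
  field_simp
  ring

lemma oddH_bounds (n : ℕ) : 0 ≤ oddH n ∧ oddH n ≤ n := by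
  induction n with
  | zero => simp [oddH_zero]
  | succ n ih =>
    rw [oddH_succ]
    have h1 : (0 : ℝ) ≤ 1 / (2 * n + 1) := by positivity
    have h2 : (1 : ℝ) / (2 * n + 1) ≤ 1 := by
      rw [div_le_one (by positivity)]
      linarith [(Nat.cast_nonneg n : (0 : ℝ) ≤ n)]
    push_cast
    constructor <;> linarith [ih.1, ih.2]

lemma centralBinom_le (n : ℕ) : (n.centralBinom : ℝ) ≤ 4 ^ n := by
  exact_mod_cast Nat.centralBinom_le_four_pow n

lemma centralBinom_succ (n : ℕ) :
    ((n : ℝ) + 1) * (n + 1).centralBinom = (4 * n + 2) * n.centralBinom := by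
  have h := Nat.succ_mul_centralBinom_succ n
  have h' : ((n : ℝ) + 1) * (n + 1).centralBinom = 2 * (2 * n + 1) * n.centralBinom := by
    exact_mod_cast h
  rw [h']
  ring

lemma centralBinom_bound (n : ℕ) : |(n.centralBinom : ℝ)| ≤ (n + 1) * 4 ^ n := by
  rw [Nat.abs_cast]
  have h4 : (0 : ℝ) ≤ n * 4 ^ n := by positivity
  linarith [centralBinom_le n]

lemma centralBinom_oddH_le (n : ℕ) : n.centralBinom * oddH n ≤ n * 4 ^ n := by
  rw [mul_comm]
  exact mul_le_mul (oddH_bounds n).2 (centralBinom_le n) (by positivity) (by positivity)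

lemma centralBinom_oddH_nonneg (n : ℕ) : 0 ≤ n.centralBinom * oddH n :=
  mul_nonneg (by positivity) (oddH_bounds n).1

lemma tsum_pow_zero (c : ℕ → ℝ) : ∑' n, c n * (0 : ℝ) ^ n = c 0 := by
  rw [tsum_eq_single 0 fun n hn => by simp [hn]]
  simp

lemma tsum_centralBinom {x : ℝ} (hx : |x| < 1 / 4) :
    √(1 - 4 * x) * ∑' n : ℕ, (n.centralBinom : ℝ) * x ^ n = 1 := by
  refine eq_of_hasDerivAt (f := fun x => √(1 - 4 * x) * ∑' n : ℕ, (n.centralBinom : ℝ) * x ^ n)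
    (g := fun _ => 1) (f' := fun _ => 0) (fun y hy => ?_) (fun y _ => hasDerivAt_const _ _)
    (by simp only [tsum_pow_zero]; simp) hx
  have hA := hasDerivAt_of_recurrence (e := fun _ => 0) centralBinom_bound
    (fun n => by simpa using centralBinom_succ n) hy
  refine ((hasDerivAt_sqrt_one_sub hy).mul hA).congr_deriv ?_
  have hp : 0 < 1 - 4 * y := by linarith [(abs_lt.1 hy).2]
  have hs : √(1 - 4 * y) ≠ 0 := (Real.sqrt_pos.2 hp).ne'
  have hq : √(1 - 4 * y) ^ 2 = 1 - 4 * y := Real.sq_sqrt hp.le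
  simp only [zero_mul, tsum_zero]
  generalize √(1 - 4 * y) = s at *
  rw [← hq]
  field_simp
  ring

lemma tsum_centralBinom_oddH {x : ℝ} (hx : |x| < 1 / 4) :
    √(1 - 4 * x) * ∑' n : ℕ, (n.centralBinom * oddH n) * x ^ n = -log √(1 - 4 * x) := by
  refine eq_of_hasDerivAt
    (f := fun x => √(1 - 4 * x) * ∑' n : ℕ, (n.centralBinom * oddH n) * x ^ n)
    (g := fun x => -log √(1 - 4 * x)) (f' := fun y => 2 / √(1 - 4 * y) ^ 2)
    (fun y hy => ?_) (fun y hy => ?_)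
    (by simp only [tsum_pow_zero]; simp [oddH_zero]) hx
  all_goals
    have hp : 0 < 1 - 4 * y := by linarith [(abs_lt.1 hy).2]
    have hs : √(1 - 4 * y) ≠ 0 := (Real.sqrt_pos.2 hp).ne'
    have hq : √(1 - 4 * y) ^ 2 = 1 - 4 * y := Real.sq_sqrt hp.le
  · have hB := hasDerivAt_of_recurrence (c := fun n => n.centralBinom * oddH n)
      (e := fun n => 2 * n.centralBinom)
      (fun n => by
        rw [abs_of_nonneg (centralBinom_oddH_nonneg n)]
        have h4 : (0 : ℝ) ≤ 4 ^ n := by positivity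
        linarith [centralBinom_oddH_le n])
      (fun n => by
        rw [oddH_succ, ← mul_assoc, centralBinom_succ]
        field_simp
        ring) hy
    refine ((hasDerivAt_sqrt_one_sub hy).mul hB).congr_deriv ?_
    have hA := tsum_centralBinom hy
    simp only [mul_assoc (2 : ℝ), tsum_mul_left]
    generalize √(1 - 4 * y) = s at *
    rw [← hq]
    field_simp
    -- What remains is `s A = 1`.
    linear_combination hA
  · refine ((hasDerivAt_sqrt_one_sub hy).log hs).neg.congr_deriv ?_
    field_simp

theorem stmt_9 (x : ℝ) (hx0 : 0 < |x|) (hx : |x| < 1 / 4) :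
    ∑' n : ℕ, C (n + 1) * (H (2 * (n + 1)) - (1 / 2) * H (n + 1)) * x ^ (n + 1)
      = (1 / (2 * x)) *
        (1 - Real.sqrt (1 - 4 * x) + Real.sqrt (1 - 4 * x) * Real.log (Real.sqrt (1 - 4 * x))) := by
  have hxne : x ≠ 0 := abs_pos.1 hx0
  -- Coefficients of `2y ∑ (C n) (h n) yⁿ`: for `m = n + 1`, `binom(2n,n) / m` is `C n`. The value
  -- at `m = 0` is `0` by the conventions for subtraction and division, and the value at `m = 1` is
  -- `0` because `h 0 = 0`, so the series may start at `n = 1`.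
  let g : ℕ → ℝ := fun m => 2 * ((m - 1).centralBinom * oddH (m - 1)) / m
  have hgb : ∀ m : ℕ, |g m| ≤ (m + 1) * 4 ^ m := by
    intro m
    rcases m with _ | n
    · simp [g]
    · have h1 := centralBinom_oddH_nonneg n
      have h2 := centralBinom_oddH_le n
      simp only [g, Nat.add_sub_cancel]
      rw [abs_of_nonneg (by positivity), div_le_iff₀ (by positivity)]
      push_cast
      rw [pow_succ]
      have h4 : (0 : ℝ) < 4 ^ n := by positivity
      have hn : (0 : ℝ) ≤ n := by positivity
      nlinarith [mul_nonneg hn h4.le, mul_nonneg (mul_nonneg hn hn) h4.le]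
  have key : ∑' m, g m * x ^ m = 1 - √(1 - 4 * x) + √(1 - 4 * x) * log √(1 - 4 * x) := by
    refine eq_of_hasDerivAt (f := fun x => ∑' m, g m * x ^ m)
      (g := fun x => 1 - √(1 - 4 * x) + √(1 - 4 * x) * log √(1 - 4 * x))
      (f' := fun y => -2 / √(1 - 4 * y) * log √(1 - 4 * y)) (fun y hy => ?_) (fun y hy => ?_)
      (by simp only [tsum_pow_zero]; simp [g]) hx
    all_goals
      have hp : 0 < 1 - 4 * y := by linarith [(abs_lt.1 hy).2]
      have hs : √(1 - 4 * y) ≠ 0 := (Real.sqrt_pos.2 hp).ne'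
    · obtain ⟨d, hd, hsum⟩ := hasDerivAt_series hgb hy
      have hd2 : d = 2 * ∑' n : ℕ, (n.centralBinom * oddH n) * y ^ n := by
        rw [← hsum.tsum_eq, ← tsum_mul_left]
        refine tsum_congr fun n => ?_
        simp only [g, Nat.add_sub_cancel]
        push_cast
        field_simp
      refine hd.congr_deriv ?_
      rw [hd2, ← neg_eq_iff_eq_neg.2 (tsum_centralBinom_oddH hy)]
      field_simp
    · have hS := hasDerivAt_sqrt_one_sub hy
      refine ((hS.const_sub 1).add (hS.mul (hS.log hs))).congr_deriv ?_
      field_simp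
      ring
  have hterm : ∀ n : ℕ, C (n + 1) * (H (2 * (n + 1)) - (1 / 2) * H (n + 1)) * x ^ (n + 1)
      = (1 / (2 * x)) * (g (n + 2) * x ^ (n + 2)) := by
    intro n
    simp only [g, C, oddH, Nat.centralBinom_eq_two_mul_choose, show n + 2 - 1 = n + 1 by omega]
    push_cast
    field_simp
    ring
  rw [tsum_congr hterm, tsum_mul_left, ← key, ← (summable_coeff hgb hx).sum_add_tsum_nat_add 2]
  simp [Finset.sum_range_succ, g, oddH_zero]
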